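/- arXiv:1406.5908 — 4 statements merged into one kernel-verified Lean document; each statement's English description precedes it below -/
import Mathlib

section
/- Let H be an inner product space (over ℝ or ℂ) and let ε > 0 satisfy (1+ε)² < 2, i.e. ε < √2 − 1. Then there is no map Φ: ℂ² → H such that ‖x−y‖₁/(1+ε) ≤ ‖Φ(x)−Φ(y)‖ ≤ ‖x−y‖₁ for all x,y ∈ ℂ², where ‖·‖₁ denotes the ℓ¹-norm on ℂ². (This witnesses that Hilbert space is B-convex with n = 2.) -/
/-!
The points `0`, `v e_i`, `v e_i + v e_j`, `v e_j` of an `ℓ¹` space form a square whose sides have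
length `‖v‖` and whose two diagonals both have length `2 ‖v‖`. In an inner product space the squared
lengths of the sides of a quadrilateral `a, b, c, d` exceed those of its diagonals by
`‖a - b + c - d‖² ≥ 0`, so if a map of distortion `D` sends the square there, then
`2 (2 ‖v‖ / D)² ≤ 4 ‖v‖²`, that is, `2 ≤ D²`.
-/

/-- Enflo's roundness: a space has roundness `p` if in each quadrilateral the `p`-th powers of the
two diagonals add up to at most the sum of the `p`-th powers of the four sides. The vertices
`a, b, c, d` are listed in cyclic order, so the diagonals are `ac` and `bd`. It is the only property
of the target space that the lower bound on the distortion of `ℓ¹` depends on. -/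
def HasRoundness (X : Type*) [PseudoMetricSpace X] (p : ℝ) : Prop :=
  ∀ a b c d : X,
    dist a c ^ p + dist b d ^ p ≤ dist a b ^ p + dist b c ^ p + dist c d ^ p + dist d a ^ p

theorem norm_add_sq_add_norm_add_sq_add_norm_add_sq (𝕜 : Type*) [RCLike 𝕜] {H : Type*}
    [SeminormedAddCommGroup H] [InnerProductSpace 𝕜 H] (x y z : H) :
    ‖x + y‖ ^ 2 + ‖y + z‖ ^ 2 + ‖x + z‖ ^ 2 =
      ‖x‖ ^ 2 + ‖y‖ ^ 2 + ‖z‖ ^ 2 + ‖x + y + z‖ ^ 2 := by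
  rw [norm_add_sq (𝕜 := 𝕜) (x + y) z, inner_add_left, map_add, norm_add_sq (𝕜 := 𝕜) x y,
    norm_add_sq (𝕜 := 𝕜) y z, norm_add_sq (𝕜 := 𝕜) x z]
  ring

theorem hasRoundness_two_of_innerProductSpace (𝕜 : Type*) [RCLike 𝕜] (H : Type*)
    [SeminormedAddCommGroup H] [InnerProductSpace 𝕜 H] : HasRoundness H 2 := by
  intro a b c d
  have identity :=
    norm_add_sq_add_norm_add_sq_add_norm_add_sq 𝕜 (a - b) (b - c) (c - d)
  simp only [sub_add_sub_cancel] at identity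
  simp only [Real.rpow_two, dist_eq_norm, norm_sub_rev d a]
  linarith [sq_nonneg ‖a - b + (c - d)‖]

theorem HasRoundness.two_rpow_le_of_square {X : Type*} [PseudoMetricSpace X] {p : ℝ}
    (hX : HasRoundness X p) (hp : 0 ≤ p) {a b c d : X} {s D : ℝ} (hs : 0 < s) (hD : 0 < D)
    (hab : dist a b ≤ s) (hbc : dist b c ≤ s) (hcd : dist c d ≤ s) (hda : dist d a ≤ s)
    (hac : 2 * s / D ≤ dist a c) (hbd : 2 * s / D ≤ dist b d) :
    2 ^ p ≤ 2 * D ^ p := by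
  have side {x y : X} (h : dist x y ≤ s) : dist x y ^ p ≤ s ^ p :=
    Real.rpow_le_rpow dist_nonneg h hp
  have diagonal {x y : X} (h : 2 * s / D ≤ dist x y) : (2 * s / D) ^ p ≤ dist x y ^ p :=
    Real.rpow_le_rpow (by positivity) h hp
  have key : (2 * s / D) ^ p ≤ 2 * s ^ p := by
    linarith [hX a b c d, side hab, side hbc, side hcd, side hda, diagonal hac, diagonal hbd]
  rw [Real.div_rpow (by positivity) hD.le, Real.mul_rpow zero_le_two hs.le,
    div_le_iff₀ (by positivity), mul_right_comm] at key
  exact le_of_mul_le_mul_right key (by positivity)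

theorem norm_single_add_single_of_L1 {ι : Type*} [Fintype ι] [DecidableEq ι] {β : ι → Type*}
    [∀ k, SeminormedAddCommGroup (β k)] {i j : ι} (hij : i ≠ j) (v : β i) (w : β j) :
    ‖PiLp.single 1 i v + PiLp.single 1 j w‖ = ‖v‖ + ‖w‖ := by
  rw [PiLp.norm_eq_of_L1, Fintype.sum_eq_add i j hij]
  · simp [hij, hij.symm]
  · rintro k ⟨hki, hkj⟩
    simp [hki, hkj]

theorem exists_square_of_L1 (ι : Type*) [Fintype ι] [Nontrivial ι] {E : Type*}
    [SeminormedAddCommGroup E] (v : E) :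
    ∃ a b c d : PiLp 1 (fun _ : ι => E),
      dist a b = ‖v‖ ∧ dist b c = ‖v‖ ∧ dist c d = ‖v‖ ∧ dist d a = ‖v‖ ∧
        dist a c = 2 * ‖v‖ ∧ dist b d = 2 * ‖v‖ := by
  classical
  obtain ⟨i, j, hij⟩ := exists_pair_ne ι
  let e (k : ι) : PiLp 1 (fun _ : ι => E) := PiLp.single 1 k v
  have norm_e (k : ι) : ‖e k‖ = ‖v‖ := PiLp.norm_single 1 (fun _ : ι => E) k v
  refine ⟨0, e i, e i + e j, e j, ?_, ?_, ?_, ?_, ?_, ?_⟩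
  · rw [dist_zero_left, norm_e]
  · rw [dist_self_add_right, norm_e]
  · rw [dist_add_self_left, norm_e]
  · rw [dist_zero_right, norm_e]
  · rw [dist_zero_left, norm_single_add_single_of_L1 hij, two_mul]
  · rw [dist_eq_norm, sub_eq_add_neg, ← PiLp.single_neg, norm_single_add_single_of_L1 hij,
      norm_neg, two_mul]

theorem no_biLipschitz_ell1_into_innerProductSpace_general
    {ι : Type*} [Fintype ι] [Nontrivial ι] {E : Type*} [NormedAddCommGroup E] [Nontrivial E]
    {X : Type*} [PseudoMetricSpace X] {p : ℝ} (hX : HasRoundness X p) (hp : 0 ≤ p)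
    {D : ℝ} (hD : 0 < D) (hDp : 2 * D ^ p < 2 ^ p) :
    ¬ ∃ Φ : PiLp 1 (fun _ : ι => E) → X, ∀ x y,
        dist x y / D ≤ dist (Φ x) (Φ y) ∧ dist (Φ x) (Φ y) ≤ dist x y := by
  rintro ⟨Φ, hΦ⟩
  obtain ⟨v, hv⟩ := exists_ne (0 : E)
  obtain ⟨a, b, c, d, hab, hbc, hcd, hda, hac, hbd⟩ := exists_square_of_L1 ι v
  exact hDp.not_ge <| hX.two_rpow_le_of_square hp (norm_pos_iff.2 hv) hD
    (hab ▸ (hΦ a b).2) (hbc ▸ (hΦ b c).2) (hcd ▸ (hΦ c d).2) (hda ▸ (hΦ d a).2)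
    (hac ▸ (hΦ a c).1) (hbd ▸ (hΦ b d).1)

/-- Hilbert space is B-convex with `n = 2`: if `H` is an inner product space
(over `ℝ` or `ℂ`) and `0 < ε` satisfies `(1 + ε)² < 2`, then there is no map
`Φ : ℂ² → H` with `‖x - y‖₁ / (1 + ε) ≤ ‖Φ x - Φ y‖ ≤ ‖x - y‖₁` for all
`x, y ∈ ℂ²`, where `‖·‖₁` is the `ℓ¹`-norm on `ℂ²`. -/
theorem no_biLipschitz_ell1_into_innerProductSpace
    (𝕜 : Type*) [RCLike 𝕜] (H : Type*) [NormedAddCommGroup H] [InnerProductSpace 𝕜 H]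
    (ε : ℝ) (hε : 0 < ε) (hε2 : (1 + ε) ^ 2 < 2) :
    ¬ ∃ Φ : (Fin 2 → ℂ) → H, ∀ x y : Fin 2 → ℂ,
        (∑ i, ‖x i - y i‖) / (1 + ε) ≤ ‖Φ x - Φ y‖ ∧
        ‖Φ x - Φ y‖ ≤ ∑ i, ‖x i - y i‖ := by
  rintro ⟨Φ, hΦ⟩
  refine no_biLipschitz_ell1_into_innerProductSpace_general (ι := Fin 2) (E := ℂ)
    (hasRoundness_two_of_innerProductSpace 𝕜 H) zero_le_two (D := 1 + ε) (by linarith)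
    (by simp only [Real.rpow_two]; linarith) ⟨fun x => Φ x.ofLp, fun x y => ?_⟩
  simpa only [dist_eq_norm, PiLp.norm_eq_of_L1, PiLp.sub_apply] using hΦ x.ofLp y.ofLp
end

section
/- Let G be a group acting on the right on a set X, and let (x_i)_{i≥0} be a sequence of pairwise distinct points of X that is rectifiable. Let B be a group generated by a sequence of elements b₁, b₂, …, let n: ℕ → ℕ be strictly increasing with n(1) ≥ 1, and let f: X → B be the function with f(x_{n(j)}) = b_j for all j ≥ 1 and f(x) = 1 for all other x ∈ X. Let W = ⟨G ∪ {f}⟩ be the subgroup of the unrestricted wreath product B^X ⋊ G generated by G and f. Then W contains ι(c) for every c in the commutator subgroup [B,B], where ι: B → B^X ⋊ G sends b ∈ B to the function X → B with value b at x₀ and value 1 elsewhere. -/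
/-- A right action of a group `G` on a set `X`. -/
structure RAct (G : Type*) (X : Type*) [Group G] where
  act : X → G → X
  act_one : ∀ x, act x 1 = x
  act_mul : ∀ x g h, act (act x g) h = act x (g * h)

namespace RAct

variable {G X : Type*} [Group G]

/-- The automorphism of `B ^ X` induced by `g : G`, `φ ↦ φ(· g)`. -/
def autFun {B : Type*} [Group B] (A : RAct G X) (g : G) : MulAut (X → B) where
  toFun φ := fun x => φ (A.act x g)
  invFun φ := fun x => φ (A.act x g⁻¹)
  left_inv φ := funext fun x => by
    show φ (A.act (A.act x g⁻¹) g) = φ x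
    rw [A.act_mul, inv_mul_cancel, A.act_one]
  right_inv φ := funext fun x => by
    show φ (A.act (A.act x g) g⁻¹) = φ x
    rw [A.act_mul, mul_inv_cancel, A.act_one]
  map_mul' φ ψ := rfl

/-- The action of `G` on the unrestricted product `B ^ X` by translation of the
argument, as a homomorphism `G →* MulAut (X → B)`.  With this action, for
`φ : X → B` and `g : G` the conjugate `g⁻¹ φ g` in `B^X ⋊ G` is `φ(· g⁻¹)`,
i.e. `(φ · g)(x) = φ (x g⁻¹)`. -/
def wreathAut (A : RAct G X) (B : Type*) [Group B] : G →* MulAut (X → B) where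
  toFun := A.autFun
  map_one' := by
    ext φ x
    simp [autFun, A.act_one]
  map_mul' g h := by
    ext φ x
    simp [autFun, A.act_mul]

end RAct

/-- The unrestricted permutational wreath product `B ^ X ⋊ G` associated to a
right action of `G` on `X`. -/
abbrev UWreath {G X : Type*} [Group G] (A : RAct G X) (B : Type*) [Group B] :=
  (X → B) ⋊[A.wreathAut B] G

/-!
Let `K` be the group of all `d : B` for which `W` contains the function with value `d` at `x i` and
`1` elsewhere. Conjugating by translates of `f` shows that every value `f (x j)` normalizes `K`. If
`g` moves `x k` to `x j` as in the definition of rectifiability, then the translate of `f` by `g`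
commutes with `f` at every point except `x k`: at any other `x l`, the point `x l · g` is either
`x l` itself or outside the sequence. The commutator of the two functions is therefore supported at
`x k`, where it is `⁅f (x j), f (x k)⁆`; translating it to `x i` puts this element into `K`.
A subgroup normalized by the `f (x j)` that contains all their commutators contains the commutator
subgroup of the group they generate.
-/

section Commutator

open scoped commutatorElement

variable {G : Type*} [Group G] {K : Subgroup G} {s t : Set G}

theorem commutatorElement_mem_of_mem_closure_right {a b : G}
    (ht : t ⊆ Subgroup.normalizer (K : Set G)) (h : ∀ b ∈ t, ⁅a, b⁆ ∈ K)
    (hb : b ∈ Subgroup.closure t) : ⁅a, b⁆ ∈ K := by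
  have closure_le : Subgroup.closure t ≤ Subgroup.normalizer (K : Set G) :=
    (Subgroup.closure_le _).2 ht
  induction hb using Subgroup.closure_induction with
  | mem b hb => exact h b hb
  | one => simp only [commutatorElement_one_right, one_mem]
  | mul b b' hb _ hab hab' =>
    rw [commutatorElement_mul_right_eq_mul_conj, mul_assoc, mul_assoc, ← mul_assoc b]
    exact K.mul_mem hab ((Subgroup.mem_normalizer_iff.1 (closure_le hb) _).1 hab')
  | inv b hb hab =>
    rw [commutatorElement_inv_right, ← commutatorElement_inv a b]
    exact (Subgroup.mem_normalizer_iff''.1 (closure_le hb) _).1 (K.inv_mem hab)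

theorem commutator_closure_closure_le (hs : s ⊆ Subgroup.normalizer (K : Set G))
    (ht : t ⊆ Subgroup.normalizer (K : Set G)) (h : ∀ a ∈ s, ∀ b ∈ t, ⁅a, b⁆ ∈ K) :
    ⁅Subgroup.closure s, Subgroup.closure t⁆ ≤ K := by
  refine Subgroup.commutator_le.2 fun a ha b hb =>
    commutatorElement_mem_of_mem_closure_right ht (fun b hb => ?_) hb
  rw [← commutatorElement_inv]
  refine K.inv_mem (commutatorElement_mem_of_mem_closure_right hs (fun a ha => ?_) ha)
  rw [← commutatorElement_inv]
  exact K.inv_mem (h a ha b hb)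

end Commutator

theorem mul_mulSingle_mul_inv {I : Type*} [DecidableEq I] {M : I → Type*} [∀ i, Group (M i)]
    (φ : ∀ i, M i) (i : I) (d : M i) :
    φ * Pi.mulSingle i d * φ⁻¹ = Pi.mulSingle i (φ i * d * (φ i)⁻¹) := by
  ext j
  obtain rfl | hj := eq_or_ne j i
  · simp only [Pi.mul_apply, Pi.inv_apply, Pi.mulSingle_eq_same]
  · simp only [Pi.mul_apply, Pi.inv_apply, Pi.mulSingle_eq_of_ne hj, mul_one, mul_inv_cancel]

section

open SemidirectProduct

theorem inl_aut_mem {N G : Type*} [Group N] [Group G] {φ : G →* MulAut N}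
    {W : Subgroup (N ⋊[φ] G)} (hW : (inr : G →* N ⋊[φ] G).range ≤ W) {u : N}
    (hu : inl u ∈ W) (g : G) : inl (φ g u) ∈ W := by
  rw [inl_aut]
  exact W.mul_mem (W.mul_mem (hW ⟨g, rfl⟩) hu) (hW ⟨g⁻¹, rfl⟩)

end

namespace RAct

open SemidirectProduct
open scoped commutatorElement

variable {G X B ι : Type*} [Group G] [Group B] {A : RAct G X} {x : ι → X} {f : X → B}

theorem act_injective (A : RAct G X) (g : G) : Function.Injective (A.act · g) :=
  Function.LeftInverse.injective (g := (A.act · g⁻¹)) fun p =>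
    (A.act_mul p g g⁻¹).trans (by rw [mul_inv_cancel, A.act_one])

/-- The element `g` moves `x i` to `x j` and moves no other term of the family `x` to a term with a
different index. -/
def Rectifies (A : RAct G X) (x : ι → X) (g : G) (i j : ι) : Prop :=
  A.act (x i) g = x j ∧ ∀ k l, k ≠ i → k ≠ l → A.act (x k) g ≠ x l

/-- Rectifiability, for a family of points with an arbitrary index type in place of a sequence. -/
def Rectifiable (A : RAct G X) (x : ι → X) : Prop :=
  ∀ i j, ∃ g, A.Rectifies x g i j

variable [DecidableEq X]

theorem wreathAut_mulSingle_act (A : RAct G X) (p : X) (g : G) (d : B) :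
    A.wreathAut B g (Pi.mulSingle (A.act p g) d) = Pi.mulSingle p d := by
  ext q
  change (Pi.mulSingle (A.act p g) d : X → B) (A.act q g) = (Pi.mulSingle p d : X → B) q
  simp only [Pi.mulSingle_apply, (A.act_injective g).eq_iff]

theorem Rectifies.commutatorElement_wreathAut {g : G} {i j : ι} (hg : A.Rectifies x g i j)
    (hf : f.mulSupport ⊆ Set.range x) :
    ⁅A.wreathAut B g f, f⁆ = Pi.mulSingle (x i) ⁅f (x j), f (x i)⁆ := by
  ext p
  change ⁅f (A.act p g), f p⁆ = _
  obtain rfl | hp := eq_or_ne p (x i)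
  · rw [hg.1, Pi.mulSingle_eq_same]
  rw [Pi.mulSingle_eq_of_ne hp]
  by_cases hfp : f p = 1
  · rw [hfp, commutatorElement_one_right]
  by_cases hfpg : f (A.act p g) = 1
  · rw [hfpg, commutatorElement_one_left]
  obtain ⟨k, rfl⟩ := hf hfp
  obtain ⟨l, hl⟩ := hf hfpg
  have hki : k ≠ i := fun h => hp (congrArg x h)
  have hkl : k = l := by_contra fun h => hg.2 k l hki h hl.symm
  rw [← hl, hkl, commutatorElement_self]

/-- The group of all `d : B` such that the subgroup `W` of the wreath product contains the function
with value `d` at `p` and `1` elsewhere. -/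
def singleSubgroup (W : Subgroup (UWreath A B)) (p : X) : Subgroup B :=
  W.comap (inl.comp (MonoidHom.mulSingle (fun _ : X => B) p))

variable {W : Subgroup (UWreath A B)}

theorem mem_singleSubgroup {p : X} {d : B} :
    d ∈ singleSubgroup W p ↔ inl (Pi.mulSingle p d) ∈ W :=
  Iff.rfl

theorem apply_mem_normalizer_singleSubgroup {φ : X → B} (hφ : inl φ ∈ W) (p : X) :
    φ p ∈ Subgroup.normalizer (singleSubgroup W p : Set B) := by
  refine Subgroup.mem_normalizer_iff.2 fun d => ?_
  rw [mem_singleSubgroup, mem_singleSubgroup, ← mul_mulSingle_mul_inv, map_mul, map_mul, map_inv,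
    Subgroup.mul_mem_cancel_right _ (W.inv_mem hφ), Subgroup.mul_mem_cancel_left _ hφ]

theorem singleSubgroup_act_le (hW : (inr : G →* UWreath A B).range ≤ W) (p : X) (g : G) :
    singleSubgroup W (A.act p g) ≤ singleSubgroup W p := by
  intro d hd
  rw [mem_singleSubgroup, ← wreathAut_mulSingle_act A p g d]
  exact inl_aut_mem hW hd g

theorem Rectifiable.apply_mem_normalizer_singleSubgroup (hx : A.Rectifiable x)
    (hW : (inr : G →* UWreath A B).range ≤ W) (hfW : inl f ∈ W) (i j : ι) :
    f (x j) ∈ Subgroup.normalizer (singleSubgroup W (x i) : Set B) := by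
  obtain ⟨g, hg, -⟩ := hx i j
  rw [← hg]
  exact RAct.apply_mem_normalizer_singleSubgroup (inl_aut_mem hW hfW g) (x i)

theorem Rectifiable.commutatorElement_mem_singleSubgroup (hx : A.Rectifiable x)
    (hW : (inr : G →* UWreath A B).range ≤ W) (hfW : inl f ∈ W)
    (hf : f.mulSupport ⊆ Set.range x) (i j k : ι) :
    ⁅f (x j), f (x k)⁆ ∈ singleSubgroup W (x i) := by
  obtain ⟨h, hh, -⟩ := hx i k
  refine singleSubgroup_act_le hW (x i) h ?_
  rw [hh]
  obtain ⟨g, hg⟩ := hx k j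
  rw [mem_singleSubgroup, ← hg.commutatorElement_wreathAut hf, map_commutatorElement]
  have hgf := inl_aut_mem hW hfW g
  exact W.mul_mem (W.mul_mem (W.mul_mem hgf hfW) (W.inv_mem hgf)) (W.inv_mem hfW)

theorem Rectifiable.commutator_closure_le_singleSubgroup (hx : A.Rectifiable x)
    (hW : (inr : G →* UWreath A B).range ≤ W) (hfW : inl f ∈ W)
    (hf : f.mulSupport ⊆ Set.range x) (i : ι) :
    ⁅Subgroup.closure (Set.range (f ∘ x)), Subgroup.closure (Set.range (f ∘ x))⁆ ≤
      singleSubgroup W (x i) := by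
  have normalizes : Set.range (f ∘ x) ⊆ Subgroup.normalizer (singleSubgroup W (x i) : Set B) :=
    Set.range_subset_iff.2 (hx.apply_mem_normalizer_singleSubgroup hW hfW i)
  refine commutator_closure_closure_le normalizes normalizes ?_
  rintro _ ⟨j, rfl⟩ _ ⟨k, rfl⟩
  exact hx.commutatorElement_mem_singleSubgroup hW hfW hf i j k

end RAct

section

open SemidirectProduct
open scoped commutatorElement

theorem commutator_subgroup_in_W_general {G X B ι : Type*} [Group G] [Group B] [DecidableEq X]
    {A : RAct G X} {x : ι → X} (hx : A.Rectifiable x) {f : X → B}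
    (hf : f.mulSupport ⊆ Set.range x) (i : ι) {c : B}
    (hc : c ∈ ⁅Subgroup.closure (Set.range (f ∘ x)), Subgroup.closure (Set.range (f ∘ x))⁆) :
    (inl (fun p => if p = x i then c else 1) : UWreath A B) ∈
      Subgroup.closure (Set.range (inr : G →* UWreath A B) ∪ {inl f}) := by
  have mulSingle_eq : (fun p => if p = x i then c else 1) = (Pi.mulSingle (x i) c : X → B) :=
    funext fun p => (Pi.mulSingle_apply (x i) c p).symm
  rw [mulSingle_eq]
  refine RAct.mem_singleSubgroup.1 (hx.commutator_closure_le_singleSubgroup ?_ ?_ hf i hc)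
  · exact fun _ hg => Subgroup.subset_closure (Or.inl hg)
  · exact Subgroup.subset_closure (Or.inr rfl)

end

open SemidirectProduct in
/-- Let `G` act on the right on `X`, let `(x i)` be a rectifiable sequence of
pairwise distinct points of `X`, let `B` be generated by `b₁, b₂, …`, let
`n : ℕ → ℕ` be strictly increasing with `n 1 ≥ 1`, and let `f : X → B` take the
value `b j` at `x (n j)` for `j ≥ 1` and the value `1` elsewhere.  Then the
subgroup `W = ⟨G ∪ {f}⟩` of the unrestricted wreath product `B^X ⋊ G` contains
`ι c` for every `c ∈ [B, B]`, where `ι b` is the function with value `b` at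
`x 0` and `1` elsewhere. -/
theorem commutator_subgroup_in_W
    (G X B : Type) [Group G] [Group B] [DecidableEq X]
    (A : RAct G X)
    (x : ℕ → X) (hdist : Function.Injective x)
    (hrect : ∀ i j : ℕ, ∃ g : G, A.act (x i) g = x j ∧
      ∀ k l : ℕ, k ≠ i → k ≠ l → A.act (x k) g ≠ x l)
    (b : ℕ → B)
    (hgen : Subgroup.closure {c : B | ∃ j : ℕ, 1 ≤ j ∧ c = b j} = ⊤)
    (n : ℕ → ℕ) (hn : StrictMono n) (hn1 : 1 ≤ n 1)
    (f : X → B)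
    (hf1 : ∀ j : ℕ, 1 ≤ j → f (x (n j)) = b j)
    (hf2 : ∀ p : X, (∀ j : ℕ, 1 ≤ j → p ≠ x (n j)) → f p = 1)
    (c : B) (hc : c ∈ commutator B) :
    (inl (fun p => if p = x 0 then c else 1) : UWreath A B) ∈
      Subgroup.closure
        (Set.range (inr : G →* UWreath A B) ∪ {(inl f : UWreath A B)}) := by
  have hB : Subgroup.closure (Set.range (f ∘ x)) = ⊤ := top_unique <| hgen ▸
    Subgroup.closure_mono fun _ ⟨j, hj, hbj⟩ => ⟨n j, (hf1 j hj).trans hbj.symm⟩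
  exact commutator_subgroup_in_W_general hrect
    (Function.mulSupport_subset_iff'.2 fun p hp => hf2 p fun j _ h => hp ⟨n j, h.symm⟩) 0
    (by rwa [hB, ← commutator_def])
end

section
/- Let G be a finite group with a generating set S of cardinality d. Then there exist a finite group H with a generating set T of cardinality d+1 and an injective group homomorphism ι: G → H whose image is contained in the commutator subgroup [H,H], such that 2‖g‖_S ≤ ‖ι(g)‖_perfect ≤ 4‖g‖_S for all g ∈ G, where ‖·‖_perfect is the perfect norm on [H,H] with respect to T and ‖·‖_S is the word norm on G. -/
/-- The word norm of `g` with respect to `S`: the least length of an expression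
of `g` as a product of elements of `S ∪ S⁻¹`. -/
noncomputable def wordNorm {G : Type*} [Group G] (S : Set G) (g : G) : ℕ :=
  sInf {n | ∃ l : List G, (∀ x ∈ l, x ∈ S ∨ x⁻¹ ∈ S) ∧ l.length = n ∧ l.prod = g}

/-- The perfect norm of `h` with respect to the generating set `T`: the least
length of a balanced word (i.e. a word lying in the commutator subgroup of the
free group `F_T`) representing `h`. -/
noncomputable def perfectNorm {H : Type*} [Group H] (T : Set H) (h : H) : ℕ :=
  sInf {n | ∃ L : List (T × Bool),
    FreeGroup.mk L ∈ commutator (FreeGroup T) ∧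
    L.length = n ∧
    FreeGroup.lift (fun t : T => (t : H)) (FreeGroup.mk L) = h}

/-!
Let `n` be an exponent of `G` and let `ℓ` be at least `2 ‖g‖_S` for every `g`. In the wreath product
of `G` by the cyclic group `ℤ / ℓn`, take the shift `t` and, for each `s ∈ S`, the staircase
`f_s(k) = s ^ ⌊k / ℓ⌋`, which closes up around the cycle because `s ^ n = 1`.

Since `⌊k / ℓ⌋` increases exactly when `k` arrives at a multiple of `ℓ`, the commutator `⁅f_s, t⁆`
is the comb with `s` at the multiples of `ℓ` and `1` elsewhere. So every letter of `g` costs at most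
four letters in its comb.

Conversely, evaluate a word of length at most `ℓ` at the positions `0` and `ℓ`. The shifts before a
staircase letter `f_s ^ (±1)` add up to some `p` with `|p| < ℓ`, so the letter is read at `-p` and
`ℓ - p`, and exactly one of these two values is a letter `s ^ (±1)`, while the other is `1`.
The comb of `g` has the value `g` at both positions, so it needs at least `2 ‖g‖_S` such letters;
words longer than `ℓ` are long enough by the choice of `ℓ`.
-/

open scoped commutatorElement

section WordNorm

variable {G H : Type*} [Group G] [Group H] {S : Set G}

theorem exists_list_length_eq_wordNorm {g : G} (hg : g ∈ Subgroup.closure S) :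
    ∃ l : List G, (∀ x ∈ l, x ∈ S ∨ x⁻¹ ∈ S) ∧ l.length = wordNorm S g ∧ l.prod = g := by
  rw [← Subgroup.mem_toSubmonoid, Subgroup.closure_toSubmonoid] at hg
  obtain ⟨l, hl, hprod⟩ := Submonoid.exists_list_of_mem_closure hg
  exact Nat.sInf_mem
    (s := {n | ∃ l : List G, (∀ x ∈ l, x ∈ S ∨ x⁻¹ ∈ S) ∧ l.length = n ∧ l.prod = g})
    ⟨l.length, l, hl, rfl, hprod⟩

theorem wordNorm_prod_le_length {l : List G} (hl : ∀ x ∈ l, x ∈ S ∨ x⁻¹ ∈ S) :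
    wordNorm S l.prod ≤ l.length :=
  Nat.sInf_le ⟨l, hl, rfl, rfl⟩

@[simp]
theorem wordNorm_one : wordNorm S 1 = 0 := by
  simpa using wordNorm_prod_le_length (S := S) (l := []) (by simp)

theorem wordNorm_le_one {s : G} (hs : s ∈ S ∨ s⁻¹ ∈ S) : wordNorm S s ≤ 1 := by
  simpa using wordNorm_prod_le_length (S := S) (l := [s]) (by simpa using hs)

theorem wordNorm_mul_le {g h : G} (hg : g ∈ Subgroup.closure S) (hh : h ∈ Subgroup.closure S) :
    wordNorm S (g * h) ≤ wordNorm S g + wordNorm S h := by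
  obtain ⟨l, hl, hlen, rfl⟩ := exists_list_length_eq_wordNorm hg
  obtain ⟨m, hm, hmlen, rfl⟩ := exists_list_length_eq_wordNorm hh
  rw [← hlen, ← hmlen, ← List.length_append, ← List.prod_append]
  exact wordNorm_prod_le_length fun x hx => (List.mem_append.mp hx).elim (hl x) (hm x)

theorem wordNorm_map_le (f : G →* H) {T : Set H} (hf : Set.MapsTo f S T) {g : G}
    (hg : g ∈ Subgroup.closure S) : wordNorm T (f g) ≤ wordNorm S g := by
  obtain ⟨l, hl, hlen, rfl⟩ := exists_list_length_eq_wordNorm hg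
  rw [← hlen, ← List.length_map f, map_list_prod]
  refine wordNorm_prod_le_length (List.forall_mem_map.mpr fun x hx => ?_)
  rw [← map_inv]
  exact (hl x hx).imp (@hf x) (@hf x⁻¹)

end WordNorm

section PerfectNorm

variable {G H : Type*} [Group G] [Group H] {S : Set G} {T : Set H}

theorem perfectNorm_lift_le_length {L : List (T × Bool)}
    (hL : FreeGroup.mk L ∈ commutator (FreeGroup T)) :
    perfectNorm T (FreeGroup.lift (fun t : T => (t : H)) (FreeGroup.mk L)) ≤ L.length :=
  Nat.sInf_le ⟨L, hL, rfl, rfl⟩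

theorem exists_balanced_length_eq_perfectNorm (hT : Subgroup.closure T = ⊤) {h : H}
    (hh : h ∈ commutator H) :
    ∃ L : List (T × Bool), FreeGroup.mk L ∈ commutator (FreeGroup T) ∧
      L.length = perfectNorm T h ∧
      FreeGroup.lift (fun t : T => (t : H)) (FreeGroup.mk L) = h := by
  have hsurj : (FreeGroup.lift (fun t : T => (t : H))).range = ⊤ := by
    rw [FreeGroup.range_lift_eq_closure, Subtype.range_coe, hT]
  rw [commutator_def, ← hsurj, MonoidHom.range_eq_map, ← Subgroup.map_commutator] at hh
  obtain ⟨⟨L⟩, hL, hLh⟩ := hh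
  exact Nat.sInf_mem (s := {n | ∃ L : List (T × Bool),
      FreeGroup.mk L ∈ commutator (FreeGroup T) ∧ L.length = n ∧
      FreeGroup.lift (fun t : T => (t : H)) (FreeGroup.mk L) = h})
    ⟨L.length, L, hL, rfl, hLh⟩

theorem wordNorm_le_perfectNorm (hT : Subgroup.closure T = ⊤) {h : H} (hh : h ∈ commutator H) :
    wordNorm T h ≤ perfectNorm T h := by
  obtain ⟨L, -, hlen, rfl⟩ := exists_balanced_length_eq_perfectNorm hT hh
  rw [← hlen, FreeGroup.lift_mk, ← List.length_map]
  refine wordNorm_prod_le_length (List.forall_mem_map.mpr ?_)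
  rintro ⟨t, _ | _⟩ - <;> simp

@[simp]
theorem perfectNorm_one : perfectNorm T 1 = 0 := by
  simpa using perfectNorm_lift_le_length (T := T) (L := [])
    (by rw [← FreeGroup.one_eq_mk]; exact one_mem _)

theorem perfectNorm_mul_le (hT : Subgroup.closure T = ⊤) {g h : H} (hg : g ∈ commutator H)
    (hh : h ∈ commutator H) : perfectNorm T (g * h) ≤ perfectNorm T g + perfectNorm T h := by
  obtain ⟨L, hL, hlen, rfl⟩ := exists_balanced_length_eq_perfectNorm hT hg
  obtain ⟨M, hM, hmlen, rfl⟩ := exists_balanced_length_eq_perfectNorm hT hh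
  rw [← hlen, ← hmlen, ← List.length_append, ← map_mul, FreeGroup.mul_mk]
  exact perfectNorm_lift_le_length (FreeGroup.mul_mk (L₁ := L) ▸ mul_mem hL hM)

theorem perfectNorm_inv_le (hT : Subgroup.closure T = ⊤) {h : H} (hh : h ∈ commutator H) :
    perfectNorm T h⁻¹ ≤ perfectNorm T h := by
  obtain ⟨L, hL, hlen, rfl⟩ := exists_balanced_length_eq_perfectNorm hT hh
  rw [← hlen, ← map_inv, FreeGroup.inv_mk, ← FreeGroup.invRev_length]
  exact perfectNorm_lift_le_length (FreeGroup.inv_mk (L := L) ▸ inv_mem hL)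

theorem commutatorElement_mem_commutator (a b : G) : ⁅a, b⁆ ∈ commutator G :=
  Subgroup.commutator_mem_commutator (Subgroup.mem_top a) (Subgroup.mem_top b)

theorem perfectNorm_commutatorElement_le_four {a b : H} (ha : a ∈ T) (hb : b ∈ T) :
    perfectNorm T ⁅a, b⁆ ≤ 4 := by
  lift a to T using ha
  lift b to T using hb
  let L : List (T × Bool) := [(a, true), (b, true), (a, false), (b, false)]
  have hL : FreeGroup.mk L ∈ commutator (FreeGroup T) :=
    commutatorElement_mem_commutator (FreeGroup.of a) (FreeGroup.of b)
  simpa [L, commutatorElement_def, mul_assoc] using perfectNorm_lift_le_length hL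

theorem map_mem_commutator (hS : Subgroup.closure S = ⊤) {f : G →* H}
    (hf : ∀ s ∈ S, f s ∈ commutator H) (g : G) : f g ∈ commutator H :=
  have hle : Subgroup.closure S ≤ (commutator H).comap f := (Subgroup.closure_le _).mpr hf
  hle (hS ▸ Subgroup.mem_top g)

theorem perfectNorm_map_le_mul_wordNorm (hS : Subgroup.closure S = ⊤)
    (hT : Subgroup.closure T = ⊤) {f : G →* H} (hf : ∀ s ∈ S, f s ∈ commutator H) {C : ℕ}
    (hC : ∀ s ∈ S, perfectNorm T (f s) ≤ C) (g : G) :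
    perfectNorm T (f g) ≤ C * wordNorm S g := by
  have hcomm := map_mem_commutator hS hf
  have hletter (x : G) (hx : x ∈ S ∨ x⁻¹ ∈ S) : perfectNorm T (f x) ≤ C := by
    refine hx.elim (hC x) fun hx => ?_
    rw [← inv_inv x, map_inv]
    exact (perfectNorm_inv_le hT (hcomm x⁻¹)).trans (hC x⁻¹ hx)
  obtain ⟨l, hl, hlen, rfl⟩ := exists_list_length_eq_wordNorm (S := S) (hS ▸ Subgroup.mem_top g)
  rw [← hlen]
  clear hlen
  induction l with
  | nil => simp
  | cons x l ih =>
    rw [List.forall_mem_cons] at hl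
    calc perfectNorm T (f (x :: l).prod)
      _ = perfectNorm T (f x * f l.prod) := by rw [List.prod_cons, map_mul]
      _ ≤ perfectNorm T (f x) + perfectNorm T (f l.prod) :=
        perfectNorm_mul_le hT (hcomm x) (hcomm l.prod)
      _ ≤ C + C * l.length := add_le_add (hletter x hl.1) (ih hl.2)
      _ = C * (x :: l).length := by rw [List.length_cons, Nat.mul_succ, add_comm]

end PerfectNorm

/-- The inclusion of the base group `Q → D` of the regular wreath product `D ≀ᵣ Q`; the inclusion of
the top group `Q` is `RegularWreathProduct.inl`. -/
@[simps]
def wreathBase {D Q : Type*} [Group D] [Group Q] : (Q → D) →* D ≀ᵣ Q where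
  toFun f := ⟨f, 1⟩
  map_one' := rfl
  map_mul' f g := by ext <;> simp

open Multiplicative RegularWreathProduct

section Staircase

variable {G : Type*} [Group G] (ℓ n : ℕ)

/-- The function `k ↦ s ^ ⌊k / ℓ⌋` on `ℤ / ℓn`, which climbs by a factor `s` every `ℓ` steps. It is
computed on the representative `0 ≤ k < ℓn`, hence closes up around the cycle when `s ^ n = 1`. -/
def staircase (s : G) (k : Multiplicative (ZMod (ℓ * n))) : G :=
  s ^ (k.toAdd.val / ℓ)

/-- The homomorphism from `G` to the base group of the wreath product placing `g` at the multiples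
of `ℓ` and `1` elsewhere. -/
@[simps]
def comb : G →* G ≀ᵣ Multiplicative (ZMod (ℓ * n)) where
  toFun g := ⟨fun k => if ℓ ∣ k.toAdd.val then g else 1, 1⟩
  map_one' := by ext <;> simp
  map_mul' g h := by
    ext k
    · by_cases hk : ℓ ∣ k.toAdd.val <;> simp [hk]
    · simp

/-- The generator of the top group `ℤ / ℓn`. -/
def shift : G ≀ᵣ Multiplicative (ZMod (ℓ * n)) :=
  inl (ofAdd 1)

/-- The subset of the wreath product corresponding to the generators `S` of `G`: the shift, and one
staircase for each `s ∈ S`. -/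
def staircaseGenerators (S : Set G) : Set (G ≀ᵣ Multiplicative (ZMod (ℓ * n))) :=
  insert (shift ℓ n) ((fun s => wreathBase (staircase ℓ n s)) '' S)

variable {ℓ n}

theorem staircase_natCast {s : G} (hs : s ^ n = 1) (j : ℕ) :
    staircase ℓ n s (ofAdd (j : ZMod (ℓ * n))) = s ^ (j / ℓ) := by
  rw [staircase, toAdd_ofAdd, ZMod.val_natCast, Nat.mod_mul_right_div_self, ← pow_eq_pow_mod _ hs]

theorem staircase_inv (s : G) : staircase ℓ n s⁻¹ = (staircase ℓ n s)⁻¹ := by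
  ext k
  exact inv_pow s _

theorem comb_left_natCast (g : G) (j : ℕ) :
    (comb ℓ n g).left (ofAdd (j : ZMod (ℓ * n))) = if ℓ ∣ j then g else 1 := by
  simp [ZMod.val_natCast, Nat.dvd_mod_iff (Nat.dvd_mul_right ℓ n)]

theorem comb_left_one (g : G) : (comb ℓ n g).left 1 = g := by
  simp

theorem comb_left_period (g : G) : (comb ℓ n g).left (ofAdd (ℓ : ZMod (ℓ * n))) = g := by
  simp [ZMod.val_natCast, Nat.dvd_mod_iff (Nat.dvd_mul_right ℓ n)]

theorem comb_injective : Function.Injective (comb ℓ n : G →* _) := fun g h hgh => by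
  rw [← comb_left_one (ℓ := ℓ) (n := n) g, hgh, comb_left_one]

theorem staircase_natCast_of_lt {s : G} (hs : s ^ n = 1) {j : ℕ} (hj : j < ℓ) :
    staircase ℓ n s (ofAdd (j : ZMod (ℓ * n))) = 1 := by
  rw [staircase_natCast hs, Nat.div_eq_of_lt hj, pow_zero]

theorem eq_shift_or_eq_staircase_of_mem {S : Set G} {a : G ≀ᵣ Multiplicative (ZMod (ℓ * n))}
    (ha : a ∈ staircaseGenerators ℓ n S ∨ a⁻¹ ∈ staircaseGenerators ℓ n S) :
    a = shift ℓ n ∨ a = (shift ℓ n)⁻¹ ∨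
      ∃ s, (s ∈ S ∨ s⁻¹ ∈ S) ∧ a = wreathBase (staircase ℓ n s) := by
  rcases ha with (rfl | ⟨s, hs, rfl⟩) | (ha | ⟨s, hs, ha⟩)
  · exact .inl rfl
  · exact .inr (.inr ⟨s, .inl hs, rfl⟩)
  · exact .inr (.inl (inv_eq_iff_eq_inv.mp ha))
  · refine .inr (.inr ⟨s⁻¹, .inr (by rwa [inv_inv]), ?_⟩)
    rw [staircase_inv, map_inv]
    exact inv_eq_iff_eq_inv.mp ha.symm

theorem exists_right_prod_eq {S : Set G} {l : List (G ≀ᵣ Multiplicative (ZMod (ℓ * n)))}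
    (hl : ∀ a ∈ l, a ∈ staircaseGenerators ℓ n S ∨ a⁻¹ ∈ staircaseGenerators ℓ n S) :
    ∃ p : ℤ, p.natAbs ≤ l.length ∧ l.prod.right = ofAdd (p : ZMod (ℓ * n)) := by
  induction l with
  | nil => exact ⟨0, by simp⟩
  | cons a l ih =>
    rw [List.forall_mem_cons] at hl
    obtain ⟨p, hp, hlp⟩ := ih hl.2
    obtain ⟨q, hq, haq⟩ : ∃ q : ℤ, q.natAbs ≤ 1 ∧ a.right = ofAdd (q : ZMod (ℓ * n)) := by
      rcases eq_shift_or_eq_staircase_of_mem hl.1 with rfl | rfl | ⟨s, -, rfl⟩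
      · exact ⟨1, by simp [shift]⟩
      · exact ⟨-1, by simp [shift]⟩
      · exact ⟨0, by simp⟩
    refine ⟨q + p, ?_, by simp [haq, hlp]⟩
    rw [List.length_cons]
    omega

variable [NeZero ℓ]

theorem staircase_period {s : G} (hs : s ^ n = 1) :
    staircase ℓ n s (ofAdd (ℓ : ZMod (ℓ * n))) = s := by
  rw [staircase_natCast hs, Nat.div_self (NeZero.pos ℓ), pow_one]

theorem ncard_staircaseGenerators (hn : ∀ g : G, g ^ n = 1) (hℓn : ℓ * n ≠ 1) {S : Set G}
    (hS : S.Finite) : (staircaseGenerators ℓ n S).ncard = S.ncard + 1 := by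
  have hinj : Function.Injective fun s : G => wreathBase (staircase ℓ n s) := fun s t hst => by
    rw [← staircase_period (ℓ := ℓ) (hn s), ← staircase_period (ℓ := ℓ) (hn t)]
    exact congrFun (congrArg left hst) _
  have hshift : shift ℓ n ∉ (fun s : G => wreathBase (staircase ℓ n s)) '' S := by
    rintro ⟨s, -, hs⟩
    have := ZMod.nontrivial_iff.mpr hℓn
    exact zero_ne_one (α := ZMod (ℓ * n)) (ofAdd.injective (congrArg right hs))
  rw [staircaseGenerators, Set.ncard_insert_of_notMem hshift (hS.image _),
    Set.ncard_image_of_injective _ hinj]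

variable [NeZero n]

theorem commutatorElement_staircase_shift {s : G} (hs : s ^ n = 1) :
    ⁅wreathBase (staircase ℓ n s), shift ℓ n⁆ = comb ℓ n s := by
  ext k
  · obtain ⟨j, hj⟩ := ZMod.natCast_zmod_surjective (k / ofAdd 1).toAdd
    obtain rfl : k = ofAdd ((j + 1 : ℕ) : ZMod (ℓ * n)) := by simp [hj]
    have hpred : (ofAdd 1)⁻¹ * ofAdd ((j + 1 : ℕ) : ZMod (ℓ * n)) = ofAdd (j : ZMod (ℓ * n)) := by
      simp [mul_comm]
    calc ⁅wreathBase (staircase ℓ n s), shift ℓ n⁆.left (ofAdd ((j + 1 : ℕ) : ZMod (ℓ * n)))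
      _ = staircase ℓ n s (ofAdd ((j + 1 : ℕ) : ZMod (ℓ * n))) *
            (staircase ℓ n s (ofAdd (j : ZMod (ℓ * n))))⁻¹ := by
        rw [← hpred]; simp [commutatorElement_def, shift]
      _ = if ℓ ∣ j + 1 then s else 1 := by
        rw [staircase_natCast hs, staircase_natCast hs, Nat.succ_div]
        split_ifs <;> simp [pow_succ']
      _ = (comb ℓ n s).left (ofAdd ((j + 1 : ℕ) : ZMod (ℓ * n))) := (comb_left_natCast s _).symm
  · simp [commutatorElement_def, shift]

theorem comb_mem_closure {S : Set G} (hn : ∀ g : G, g ^ n = 1) (hS : Subgroup.closure S = ⊤)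
    (g : G) : comb ℓ n g ∈ Subgroup.closure (staircaseGenerators ℓ n S) := by
  let K := Subgroup.closure (staircaseGenerators ℓ n S)
  have hle : Subgroup.closure S ≤ K.comap (comb ℓ n) := by
    refine (Subgroup.closure_le _).mpr fun s hs => ?_
    have hstair : wreathBase (staircase ℓ n s) ∈ K :=
      Subgroup.subset_closure (.inr (Set.mem_image_of_mem _ hs))
    have hshift : shift ℓ n ∈ K := Subgroup.subset_closure (.inl rfl)
    rw [SetLike.mem_coe, Subgroup.mem_comap, ← commutatorElement_staircase_shift (hn s)]
    exact mul_mem (mul_mem (mul_mem hstair hshift) (inv_mem hstair)) (inv_mem hshift)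
  exact hle (hS ▸ Subgroup.mem_top g)

theorem staircase_mul_period {s : G} (hs : s ^ n = 1) (k : Multiplicative (ZMod (ℓ * n))) :
    staircase ℓ n s (k * ofAdd (ℓ : ZMod (ℓ * n))) = s * staircase ℓ n s k := by
  obtain ⟨j, rfl⟩ := (ofAdd.surjective.comp ZMod.natCast_zmod_surjective) k
  rw [Function.comp_apply, ← ofAdd_add, ← Nat.cast_add, staircase_natCast hs, staircase_natCast hs,
    Nat.add_div_right _ (NeZero.pos ℓ), pow_succ']

theorem wordNorm_staircase_add_le_one {S : Set G} {s : G} (hn : s ^ n = 1) (hs : s ∈ S ∨ s⁻¹ ∈ S)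
    {p : ℤ} (hp : p.natAbs < ℓ) :
    wordNorm S (staircase ℓ n s (ofAdd (p : ZMod (ℓ * n)))) +
      wordNorm S (staircase ℓ n s (ofAdd (p : ZMod (ℓ * n)) * ofAdd (ℓ : ZMod (ℓ * n)))) ≤ 1 := by
  rw [staircase_mul_period hn]
  obtain hp0 | hp0 := le_or_gt 0 p
  · lift p to ℕ using hp0
    rw [Int.cast_natCast, staircase_natCast_of_lt hn (by simpa using hp)]
    simpa using wordNorm_le_one hs
  · obtain ⟨j, hj⟩ := Int.eq_ofNat_of_zero_le (a := p + ℓ) (by omega)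
    have hs_mul : s * staircase ℓ n s (ofAdd (p : ZMod (ℓ * n))) = 1 := by
      rw [← staircase_mul_period hn, ← ofAdd_add, ← Int.cast_natCast ℓ, ← Int.cast_add, hj,
        Int.cast_natCast, staircase_natCast_of_lt hn (by omega)]
    rw [hs_mul, eq_inv_of_mul_eq_one_right hs_mul, wordNorm_one, add_zero]
    exact wordNorm_le_one (by rwa [inv_inv, or_comm])

theorem wordNorm_left_prod_add_le_length {S : Set G} (hn : ∀ g : G, g ^ n = 1)
    (hS : Subgroup.closure S = ⊤) {l : List (G ≀ᵣ Multiplicative (ZMod (ℓ * n)))}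
    (hl : ∀ a ∈ l, a ∈ staircaseGenerators ℓ n S ∨ a⁻¹ ∈ staircaseGenerators ℓ n S)
    (hlen : l.length ≤ ℓ) :
    wordNorm S (l.prod.left 1) + wordNorm S (l.prod.left (ofAdd (ℓ : ZMod (ℓ * n)))) ≤
      l.length := by
  have hmul (g h : G) : wordNorm S (g * h) ≤ wordNorm S g + wordNorm S h :=
    wordNorm_mul_le (hS ▸ Subgroup.mem_top g) (hS ▸ Subgroup.mem_top h)
  induction l using List.reverseRecOn with
  | nil => simp
  | append_singleton l a ih =>
    rw [List.forall_mem_append, List.forall_mem_singleton] at hl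
    rw [List.length_append, List.length_singleton] at hlen ⊢
    obtain ⟨p, hp, hlp⟩ := exists_right_prod_eq hl.1
    have ha : wordNorm S (a.left (ofAdd ((-p : ℤ) : ZMod (ℓ * n)))) +
        wordNorm S (a.left (ofAdd ((-p : ℤ) : ZMod (ℓ * n)) * ofAdd (ℓ : ZMod (ℓ * n)))) ≤ 1 := by
      rcases eq_shift_or_eq_staircase_of_mem hl.2 with rfl | rfl | ⟨s, hs, rfl⟩
      · simp [shift]
      · simp [shift]
      · exact wordNorm_staircase_add_le_one (hn s) hs (by omega)
    have hleft (k) : (l ++ [a]).prod.left k =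
        l.prod.left k * a.left (ofAdd ((-p : ℤ) : ZMod (ℓ * n)) * k) := by
      simp [hlp]
    rw [hleft, hleft, mul_one]
    linarith [ih hl.1 (by omega), hmul (l.prod.left 1) (a.left (ofAdd ((-p : ℤ) : ZMod (ℓ * n)))),
      hmul (l.prod.left (ofAdd (ℓ : ZMod (ℓ * n))))
        (a.left (ofAdd ((-p : ℤ) : ZMod (ℓ * n)) * ofAdd (ℓ : ZMod (ℓ * n))))]

theorem two_mul_wordNorm_le_wordNorm_comb {S : Set G} (hn : ∀ g : G, g ^ n = 1)
    (hS : Subgroup.closure S = ⊤) {g : G} (hg : 2 * wordNorm S g ≤ ℓ) :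
    2 * wordNorm S g ≤ wordNorm (staircaseGenerators ℓ n S) (comb ℓ n g) := by
  obtain ⟨l, hl, hlen, hprod⟩ := exists_list_length_eq_wordNorm (comb_mem_closure (ℓ := ℓ) hn hS g)
  rw [← hlen]
  obtain hlt | hle := lt_or_ge l.length ℓ
  · have := wordNorm_left_prod_add_le_length hn hS hl hlt.le
    rwa [hprod, comb_left_one, comb_left_period, ← two_mul] at this
  · exact hg.trans hle

end Staircase

section StaircaseGroup

variable {G : Type*} [Group G] (ℓ n : ℕ)

/-- The group generated by the shift and the staircases of the elements of `S`, which is the target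
of the imbedding. -/
abbrev staircaseGroup (S : Set G) : Subgroup (G ≀ᵣ Multiplicative (ZMod (ℓ * n))) :=
  Subgroup.closure (staircaseGenerators ℓ n S)

/-- The shift and the staircases as elements of the group they generate. -/
def staircaseGroupGenerators (S : Set G) : Set (staircaseGroup ℓ n S) :=
  (↑) ⁻¹' staircaseGenerators ℓ n S

/-- The comb as a homomorphism to the group generated by the shift and the staircases. -/
def staircaseEmbedding [NeZero ℓ] [NeZero n] {S : Set G} (hn : ∀ g : G, g ^ n = 1)
    (hS : Subgroup.closure S = ⊤) : G →* staircaseGroup ℓ n S :=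
  (comb ℓ n).codRestrict _ (comb_mem_closure hn hS)

variable {ℓ n} {S : Set G}

theorem closure_staircaseGroupGenerators :
    Subgroup.closure (staircaseGroupGenerators ℓ n S) = ⊤ :=
  Subgroup.closure_closure_coe_preimage

variable [NeZero ℓ]

theorem ncard_staircaseGroupGenerators (hn : ∀ g : G, g ^ n = 1) (hℓn : ℓ * n ≠ 1)
    (hS : S.Finite) : (staircaseGroupGenerators ℓ n S).ncard = S.ncard + 1 := by
  rw [staircaseGroupGenerators, Set.ncard_preimage_of_injective_subset_range
    Subtype.val_injective (by simp), ncard_staircaseGenerators hn hℓn hS]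

variable [NeZero n] (hn : ∀ g : G, g ^ n = 1) (hS : Subgroup.closure S = ⊤)

theorem staircaseEmbedding_injective : Function.Injective (staircaseEmbedding ℓ n hn hS) :=
  fun _ _ hgh => comb_injective (congrArg Subtype.val hgh)

theorem exists_commutatorElement_eq_staircaseEmbedding {s : G} (hs : s ∈ S) :
    ∃ a ∈ staircaseGroupGenerators ℓ n S, ∃ b ∈ staircaseGroupGenerators ℓ n S,
      ⁅a, b⁆ = staircaseEmbedding ℓ n hn hS s :=
  have ha : wreathBase (staircase ℓ n s) ∈ staircaseGenerators ℓ n S :=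
    .inr (Set.mem_image_of_mem _ hs)
  have hb : shift ℓ n ∈ staircaseGenerators ℓ n S := .inl rfl
  ⟨⟨_, Subgroup.subset_closure ha⟩, ha, ⟨_, Subgroup.subset_closure hb⟩, hb,
    Subtype.ext (commutatorElement_staircase_shift (hn s))⟩

theorem staircaseEmbedding_mem_commutator (g : G) :
    staircaseEmbedding ℓ n hn hS g ∈ commutator (staircaseGroup ℓ n S) := by
  refine map_mem_commutator hS (fun s hs => ?_) g
  obtain ⟨a, -, b, -, h⟩ := exists_commutatorElement_eq_staircaseEmbedding (ℓ := ℓ) hn hS hs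
  exact h ▸ commutatorElement_mem_commutator a b

theorem perfectNorm_staircaseEmbedding_le (g : G) :
    perfectNorm (staircaseGroupGenerators ℓ n S) (staircaseEmbedding ℓ n hn hS g) ≤
      4 * wordNorm S g := by
  refine perfectNorm_map_le_mul_wordNorm hS closure_staircaseGroupGenerators
    (fun s _ => staircaseEmbedding_mem_commutator hn hS s) (fun s hs => ?_) g
  obtain ⟨a, ha, b, hb, h⟩ := exists_commutatorElement_eq_staircaseEmbedding (ℓ := ℓ) hn hS hs
  exact h ▸ perfectNorm_commutatorElement_le_four ha hb

theorem two_mul_wordNorm_le_perfectNorm_staircaseEmbedding {g : G} (hg : 2 * wordNorm S g ≤ ℓ) :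
    2 * wordNorm S g ≤
      perfectNorm (staircaseGroupGenerators ℓ n S) (staircaseEmbedding ℓ n hn hS g) := by
  have hT := closure_staircaseGroupGenerators (ℓ := ℓ) (n := n) (S := S)
  calc 2 * wordNorm S g
    _ ≤ wordNorm (staircaseGenerators ℓ n S) (comb ℓ n g) :=
      two_mul_wordNorm_le_wordNorm_comb hn hS hg
    _ ≤ wordNorm (staircaseGroupGenerators ℓ n S) (staircaseEmbedding ℓ n hn hS g) :=
      wordNorm_map_le (staircaseGroup ℓ n S).subtype (Set.mapsTo_preimage _ _)
        (hT ▸ Subgroup.mem_top (staircaseEmbedding ℓ n hn hS g))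
    _ ≤ perfectNorm (staircaseGroupGenerators ℓ n S) (staircaseEmbedding ℓ n hn hS g) :=
      wordNorm_le_perfectNorm hT (staircaseEmbedding_mem_commutator hn hS g)

end StaircaseGroup

/-- Imbedding a finite group in the derived subgroup of a finite group with one
more generator: if `G` is a finite group with a generating set `S` of
cardinality `d`, then there are a finite group `H` with a generating set `T` of
cardinality `d + 1` and an imbedding `ι : G → [H, H]` satisfying
`2 ‖g‖_S ≤ ‖ι g‖_perfect ≤ 4 ‖g‖_S`. -/
theorem imbed_in_derived_subgroup
    (G : Type) [Group G] [Fintype G] (d : ℕ) (S : Finset G)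
    (hcard : S.card = d) (hgen : Subgroup.closure (S : Set G) = ⊤) :
    ∃ (H : Type) (_ : Group H) (_ : Fintype H) (T : Finset H),
      T.card = d + 1 ∧
      Subgroup.closure (T : Set H) = ⊤ ∧
      ∃ ι : G →* H, Function.Injective ι ∧
        (∀ g : G, ι g ∈ commutator H) ∧
        ∀ g : G, 2 * wordNorm (S : Set G) g ≤ perfectNorm (T : Set H) (ι g) ∧
          perfectNorm (T : Set H) (ι g) ≤ 4 * wordNorm (S : Set G) g := by
  obtain ⟨n, hn0, hn⟩ := Monoid.ExponentExists.of_finite (G := G)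
  obtain ⟨ℓ, hℓ1, hℓ⟩ : ∃ ℓ, 1 < ℓ ∧ ∀ g, 2 * wordNorm (S : Set G) g ≤ ℓ := by
    obtain ⟨M, hM⟩ := (Set.finite_range (wordNorm (S : Set G))).bddAbove
    exact ⟨2 * (M + 1), by omega, fun g => by have := hM ⟨g, rfl⟩; omega⟩
  have : NeZero n := ⟨hn0.ne'⟩
  have : NeZero ℓ := ⟨by omega⟩
  let H := staircaseGroup ℓ n (S : Set G)
  obtain ⟨T, hT⟩ := (staircaseGroupGenerators ℓ n (S : Set G)).toFinite.exists_finset_coe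
  have hcardT : T.card = d + 1 := by
    rw [← Set.ncard_coe_finset, hT, ncard_staircaseGroupGenerators hn (by simp [hℓ1.ne'])
      S.finite_toSet, Set.ncard_coe_finset, hcard]
  refine ⟨H, inferInstance, Fintype.ofFinite H, T, hcardT, hT ▸ closure_staircaseGroupGenerators,
    staircaseEmbedding ℓ n hn hgen, staircaseEmbedding_injective hn hgen,
    staircaseEmbedding_mem_commutator hn hgen, fun g => ?_⟩
  rw [hT]
  exact ⟨two_mul_wordNorm_le_perfectNorm_staircaseEmbedding hn hgen (hℓ g),
    perfectNorm_staircaseEmbedding_le hn hgen g⟩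
end

section
/- Let Q be a group, let m ≥ 1, and let q, q' ∈ Q satisfy q^m = 1 and q'^m = 1. In the wreath product Q ≀ C_{2m} = Q^{C_{2m}} ⋊ C_{2m}, where C_{2m} = ℤ/2mℤ acts on functions φ: C_{2m} → Q by (φ^r)(k) = φ(k+1) for r the generator 1 of C_{2m}, let t: C_{2m} → Q be the function with t(k) = q^k for 0 ≤ k ≤ m−1 and t(m+k) = q'^k for 0 ≤ k ≤ m−1. Then the commutator [t, r] = t⁻¹·r⁻¹·t·r lies in the base group Q^{C_{2m}} and equals the function u with u(k) = q for 0 ≤ k ≤ m−1 and u(k) = q' for m ≤ k ≤ 2m−1. -/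
/-- The right action of the cyclic group `C_m = ℤ/mℤ` (written multiplicatively)
on itself by translation; with the induced action on functions `φ : C_m → Q`,
the conjugate `φ ^ r = r⁻¹ φ r` of `φ` by the generator `r = 1` in the wreath
product `Q ≀ C_m` is `k ↦ φ (k + 1)`. -/
def cycRAct (m : ℕ) : RAct (Multiplicative (ZMod m)) (ZMod m) where
  act k g := k - g.toAdd
  act_one := by intro k; simp
  act_mul := by intro k g h; simp [sub_sub]

/-!
The commutator `[t, r]` is the multiplicative difference `k ↦ t(k)⁻¹ t(k + 1)` of `t`.  The function
`t` is multiplied by `q` at each step through the first block and by `q'` at each step through the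
second, and `q ^ m = q' ^ m = 1` says exactly that the last power of each block runs on into the
value `1` with which the next block begins, cyclically.
-/

section Commutator

open SemidirectProduct

theorem inl_inv_mul_inr_inv_mul_inl_mul_inr {N G : Type*} [Group N] [Group G] (φ : G →* MulAut N)
    (n : N) (g : G) :
    (inl n : N ⋊[φ] G)⁻¹ * (inr g)⁻¹ * inl n * inr g = inl (n⁻¹ * φ g⁻¹ n) := by
  rw [map_mul, map_inv, map_inv φ, inl_aut_inv]
  simp only [map_inv, mul_assoc]

theorem RAct.wreathAut_apply {G X B : Type*} [Group G] [Group B] (A : RAct G X) (g : G)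
    (f : X → B) (x : X) : A.wreathAut B g f x = f (A.act x g) :=
  rfl

theorem cycRAct_act_ofAdd_inv {n : ℕ} (k j : ZMod n) :
    (cycRAct n).act k (Multiplicative.ofAdd j)⁻¹ = k + j :=
  sub_neg_eq_add k j

theorem cycRAct_commutator_inl_inr {Q : Type*} [Group Q] {n : ℕ} (t : ZMod n → Q) (j : ZMod n) :
    (inl t : UWreath (cycRAct n) Q)⁻¹ * (inr (Multiplicative.ofAdd j))⁻¹ * inl t *
      inr (Multiplicative.ofAdd j) = inl (fun k => (t k)⁻¹ * t (k + j)) := by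
  rw [inl_inv_mul_inr_inv_mul_inl_mul_inr]
  congr 1
  funext k
  rw [Pi.mul_apply, Pi.inv_apply, RAct.wreathAut_apply, cycRAct_act_ofAdd_inv]

end Commutator

theorem apply_val_add_one {α : Type*} {n : ℕ} [NeZero n] {f : ℕ → α} (hf : f n = f 0)
    (k : ZMod n) : f (k + 1).val = f (k.val + 1) := by
  have hval : (k + 1).val = (k.val + 1) % n := by
    rw [ZMod.val_add, ZMod.val_one_eq_one_mod, Nat.add_mod_mod]
  obtain hlt | hlast : k.val + 1 < n ∨ k.val + 1 = n := (Nat.succ_le_of_lt k.val_lt).lt_or_eq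
  · rw [hval, Nat.mod_eq_of_lt hlt]
  · rw [hval, hlast, Nat.mod_self, hf]

section BlockPow

variable {M : Type*} [Monoid M]

/-- The sequence `1, q, …, q ^ (a - 1), 1, q', q' ^ 2, …` whose restriction to `{0, …, n - 1}`
is the function `t` on `C_n`, with first block of length `a`. -/
def blockPow (a : ℕ) (q q' : M) (k : ℕ) : M :=
  if k < a then q ^ k else q' ^ (k - a)

theorem blockPow_add (a b : ℕ) (q q' : M) : blockPow a q q' (a + b) = q' ^ b := by
  rw [blockPow, if_neg (Nat.not_lt.mpr (Nat.le_add_right a b)), Nat.add_sub_cancel_left]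

theorem blockPow_zero (a : ℕ) (q q' : M) : blockPow a q q' 0 = 1 := by
  simp [blockPow]

theorem blockPow_of_le {a : ℕ} {q : M} (hq : q ^ a = 1) (q' : M) {k : ℕ} (hk : k ≤ a) :
    blockPow a q q' k = q ^ k := by
  obtain hlt | rfl := hk.lt_or_eq
  · exact if_pos hlt
  · simpa only [add_zero, pow_zero, hq] using blockPow_add k 0 q q'

theorem blockPow_succ {a : ℕ} {q : M} (hq : q ^ a = 1) (q' : M) (k : ℕ) :
    blockPow a q q' (k + 1) = blockPow a q q' k * if k < a then q else q' := by
  by_cases hk : k < a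
  · rw [blockPow_of_le hq q' hk, blockPow_of_le hq q' hk.le, if_pos hk, pow_succ]
  · obtain ⟨b, rfl⟩ := Nat.exists_eq_add_of_le (Nat.not_lt.mp hk)
    rw [if_neg hk, add_assoc, blockPow_add, blockPow_add, pow_succ]

end BlockPow

open SemidirectProduct in
theorem commutator_in_cyclic_wreath_general {Q : Type*} [Group Q] {n a b : ℕ} [NeZero n]
    (hn : a + b = n) {q q' : Q} (hq : q ^ a = 1) (hq' : q' ^ b = 1) :
    (inl (fun k : ZMod n => blockPow a q q' k.val) : UWreath (cycRAct n) Q)⁻¹ *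
      (inr (Multiplicative.ofAdd (1 : ZMod n)))⁻¹ *
      inl (fun k : ZMod n => blockPow a q q' k.val) *
      inr (Multiplicative.ofAdd (1 : ZMod n)) =
    inl (fun k : ZMod n => if k.val < a then q else q') := by
  have hperiod : blockPow a q q' n = blockPow a q q' 0 := by
    rw [← hn, blockPow_add, hq', blockPow_zero]
  rw [cycRAct_commutator_inl_inr]
  congr 1
  funext k
  rw [apply_val_add_one hperiod, blockPow_succ hq, inv_mul_cancel_left]

open SemidirectProduct in
/-- In the wreath product `Q ≀ C_{2m}`, for `q, q' ∈ Q` with `qᵐ = q'ᵐ = 1` and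
`t : C_{2m} → Q` given by `t k = q ^ k` for `0 ≤ k ≤ m - 1` and
`t (m + k) = q' ^ k` for `0 ≤ k ≤ m - 1`, the commutator
`[t, r] = t⁻¹ r⁻¹ t r` with the generator `r` of `C_{2m}` lies in the base
group `Q ^ {C_{2m}}` and equals the function with value `q` on
`{0, …, m - 1}` and value `q'` on `{m, …, 2m - 1}`. -/
theorem commutator_in_cyclic_wreath
    (Q : Type) [Group Q] (m : ℕ) (hm : 1 ≤ m) (q q' : Q)
    (hq : q ^ m = 1) (hq' : q' ^ m = 1) :
    (inl (fun k : ZMod (2 * m) => if k.val < m then q ^ k.val else q' ^ (k.val - m)) :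
        UWreath (cycRAct (2 * m)) Q)⁻¹ *
      (inr (Multiplicative.ofAdd (1 : ZMod (2 * m))) : UWreath (cycRAct (2 * m)) Q)⁻¹ *
      inl (fun k : ZMod (2 * m) => if k.val < m then q ^ k.val else q' ^ (k.val - m)) *
      inr (Multiplicative.ofAdd (1 : ZMod (2 * m))) =
    inl (fun k : ZMod (2 * m) => if k.val < m then q else q') := by
  have : NeZero (2 * m) := ⟨by omega⟩
  exact commutator_in_cyclic_wreath_general (two_mul m).symm hq hq'
end
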